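/- Let 0 ≤ s < k and 1 ≤ t with k + t ≤ n. Suppose P, Q ∈ MvPolynomial (Fin n) 𝔽_p satisfy aeval(h) P = d_{k+t,s} and aeval(h) Q = d_{k,s} · d_{k+t,k}, where aeval(h) substitutes h_1, …, h_n for the n variables. Then: (i) the support of P is contained in the support of Q (every monomial of d_{k+t,s}, written in the h's, is also a monomial of d_{k,s} · d_{k+t,k}); and (ii) no exponent vector in the support of Q - P has all of its coordinates at the positions corresponding to h_{k+1}, …, h_{k+t} nonzero, i.e. no monomial of Q - P is divisible by the product of the variables sent to h_{k+1} ⋯ h_{k+t}. -/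

import Mathlib

open MvPolynomial

/-- `V p n k` : the set of `𝔽_p`-linear combinations of the first `k` variables. -/
noncomputable def V (p n k : ℕ) [Fact p.Prime] : Finset (MvPolynomial (Fin n) (ZMod p)) :=
  (Finset.univ : Finset (Fin n → ZMod p)).image
    (fun c => ∑ j ∈ Finset.univ.filter (fun j : Fin n => j.val < k), C (c j) * X j)

/-- `f p n k = ∏_{u ∈ V_k} (X - C u)`. -/
noncomputable def f (p n k : ℕ) [Fact p.Prime] :
    Polynomial (MvPolynomial (Fin n) (ZMod p)) :=
  ∏ u ∈ V p n k, (Polynomial.X - Polynomial.C u)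

/-- Dickson invariant `d_{k,i}`. -/
noncomputable def d (p n k i : ℕ) [Fact p.Prime] : MvPolynomial (Fin n) (ZMod p) :=
  (-1) ^ (k - i) * (f p n k).coeff (p ^ i)

/-- Borel generator: `hGen p n j` is `h_{j+1}` of the paper. -/
noncomputable def hGen (p n : ℕ) [Fact p.Prime] (j : Fin n) : MvPolynomial (Fin n) (ZMod p) :=
  (Polynomial.eval (X j) (f p n j.val)) ^ (p - 1)

/-- Action of `GL_n(𝔽_p)` on `S` by linear substitution `g · y_j = ∑_i g_{ij} y_i`. -/
noncomputable def gact (p n : ℕ) [Fact p.Prime] (g : GL (Fin n) (ZMod p)) :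
    MvPolynomial (Fin n) (ZMod p) →ₐ[ZMod p] MvPolynomial (Fin n) (ZMod p) :=
  aeval (fun j : Fin n => ∑ i : Fin n, C ((g : Matrix (Fin n) (Fin n) (ZMod p)) i j) * X i)

/-!
Since `f_k` is an additive polynomial and `V_{k+1} = V_k + 𝔽_p y_{k+1}`, grouping the factors of
`f_{k+1}` gives `f_{k+1} = f_k ^ p - h_{k+1} f_k`. Unfolding this recursion,
`d_{k,i} = ∑_J ∏_{j ∈ J} h_j ^ (p ^ #{m ∈ {1, …, k} \ J | j < m})`, where `J` runs over the subsets
of `{1, …, k}` with `k - i` elements. The exponent vector determines `J`, so every monomial has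
coefficient `1`.

In the product `d_{k,s} d_{k+t,k}` the terms of `A ⊆ {1, …, k}` and `B ⊆ {1, …, k+t}` multiply to
the monomial of `d_{k+t,s}` indexed by `J` exactly when `A` consists of the `k - s` smallest
elements of `J` and `B` is the rest of `J`. Hence each monomial of `d_{k+t,s}` has coefficient `1`
in the product as well. A product term divisible by `h_{k+1} ⋯ h_{k+t}` has
`B = {k+1, …, k+t}`, which makes it the monomial of `d_{k+t,s}` indexed by `A ∪ B`.
-/

section InitialSegments

open Finset

variable {ι : Type*} [LinearOrder ι]

/-- `A` is an initial segment of the finite set `I`: it consists of the `#A` smallest elements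
of `I`. -/
def IsInitialSegment (A I : Finset ι) : Prop :=
  A ⊆ I ∧ ∀ x ∈ A, ∀ y ∈ I \ A, x < y

lemma exists_isInitialSegment_card_eq (I : Finset ι) {a : ℕ} (ha : a ≤ #I) :
    ∃ A, IsInitialSegment A I ∧ #A = a := by
  induction a with
  | zero => exact ⟨∅, by simp [IsInitialSegment], card_empty⟩
  | succ a ih =>
    obtain ⟨A, ⟨hAI, hlt⟩, hA⟩ := ih (by omega)
    have hne : (I \ A).Nonempty := by
      rw [← card_pos, card_sdiff_of_subset hAI]; omega
    have hmin := mem_sdiff.1 (min'_mem _ hne)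
    refine ⟨insert ((I \ A).min' hne) A, ⟨insert_subset hmin.1 hAI, fun x hx y hy ↦ ?_⟩, ?_⟩
    · simp only [mem_sdiff, mem_insert, not_or] at hx hy
      have hyA : y ∈ I \ A := mem_sdiff.2 ⟨hy.1, hy.2.2⟩
      rcases hx with rfl | hx
      · exact lt_of_le_of_ne (min'_le _ _ hyA) (Ne.symm hy.2.1)
      · exact hlt x hx y hyA
    · rw [card_insert_of_notMem hmin.2, hA]

namespace IsInitialSegment

variable {A B I J K L : Finset ι} {x : ι}

lemma eq_of_card_eq (hA : IsInitialSegment A I) (hB : IsInitialSegment B I)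
    (h : #A = #B) : A = B := by
  refine eq_of_subset_of_card_le (fun x hxA ↦ ?_) h.ge
  by_contra hxB
  obtain ⟨y, hyB, hyA⟩ : ∃ y ∈ B, y ∉ A := by
    by_contra! hBA
    exact hxB (eq_of_subset_of_card_le hBA h.le ▸ hxA)
  exact lt_asymm (hA.2 x hxA y (mem_sdiff.2 ⟨hB.1 hyB, hyA⟩))
    (hB.2 y hyB x (mem_sdiff.2 ⟨hA.1 hxA, hxB⟩))

lemma card_filter_lt (hA : IsInitialSegment A I) (hx : x ∈ A) :
    #{m ∈ I | x < m} = #{m ∈ A | x < m} + #(I \ A) := by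
  rw [← card_union_of_disjoint
    (disjoint_of_subset_left (filter_subset _ _) disjoint_sdiff)]
  congr 1
  ext m
  have := hA.2 x hx m
  have := @hA.1 m
  grind

lemma subset_of_card_sdiff_le (hK : IsInitialSegment K L) (hA : IsInitialSegment A J)
    (hJL : J ⊆ L) (hcard : #(L \ K) ≤ #(J \ A)) : A ⊆ K := by
  intro x hxA
  by_contra hxK
  have hxL : x ∈ L \ K := mem_sdiff.2 ⟨hJL (hA.1 hxA), hxK⟩
  have hsub : J \ A ⊆ (L \ K).erase x := fun y hy ↦ by
    have hxy := hA.2 x hxA y hy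
    have hyL := hJL (mem_sdiff.1 hy).1
    refine mem_erase.2 ⟨hxy.ne', mem_sdiff.2 ⟨hyL, fun hyK ↦ ?_⟩⟩
    exact lt_asymm hxy (hK.2 y hyK x hxL)
  exact (card_lt_card (erase_ssubset hxL)).not_ge (hcard.trans (card_le_card hsub))

end IsInitialSegment

lemma card_filter_lt_sdiff_add {J L : Finset ι} (hJL : J ⊆ L) (x : ι) :
    #{m ∈ L \ J | x < m} + #{m ∈ J | x < m} = #{m ∈ L | x < m} := by
  have h : {m ∈ L | x < m} \ {m ∈ J | x < m} = {m ∈ L \ J | x < m} := by grind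
  rw [← h, card_sdiff_add_card_eq_card (filter_subset_filter _ hJL)]

lemma IsInitialSegment.card_filter_lt_sdiff {A J K L : Finset ι} {x : ι}
    (hK : IsInitialSegment K L) (hA : IsInitialSegment A J) (hAK : A ⊆ K) (hJL : J ⊆ L)
    (hcard : #(J \ A) = #(L \ K)) (hx : x ∈ A) :
    #{m ∈ K \ A | x < m} = #{m ∈ L \ J | x < m} := by
  have hL := hK.card_filter_lt (hAK hx)
  have hJ := hA.card_filter_lt hx
  have hKA := card_filter_lt_sdiff_add hAK x
  have hLJ := card_filter_lt_sdiff_add hJL x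
  omega

end InitialSegments

section Exponents

open Finset

variable {ι : Type*} [LinearOrder ι] {p : ℕ} {A B J K L : Finset ι}

/-- The exponent vector of the monomial of a Dickson invariant indexed by `J ⊆ I`, as a monomial
in the Borel generators `h_j`, `j ∈ I`: the exponent of `h_j` is `p` to the number of elements of
`I \ J` above `j` when `j ∈ J`, and `0` otherwise. -/
noncomputable def dicksonExponent (p : ℕ) (I J : Finset ι) : ι →₀ ℕ :=
  Finsupp.indicator J fun j _ ↦ p ^ #{m ∈ I \ J | j < m}

lemma dicksonExponent_apply (p : ℕ) (I J : Finset ι) (j : ι) :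
    dicksonExponent p I J j = if j ∈ J then p ^ #{m ∈ I \ J | j < m} else 0 := by
  simp [dicksonExponent, Finsupp.indicator_apply]

lemma support_dicksonExponent (hp : p ≠ 0) (I J : Finset ι) :
    (dicksonExponent p I J).support = J := by
  ext j
  simp [dicksonExponent_apply, hp]

lemma dicksonExponent_add (hK : IsInitialSegment K L) (hA : IsInitialSegment A J)
    (hAK : A ⊆ K) (hJL : J ⊆ L) (hcard : #(J \ A) = #(L \ K)) :
    dicksonExponent p K A + dicksonExponent p L (J \ A) = dicksonExponent p L J := by
  ext j
  simp only [Finsupp.add_apply, dicksonExponent_apply, mem_sdiff]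
  by_cases hjJ : j ∈ J
  · by_cases hjA : j ∈ A
    · simp [hjA, hjJ, hK.card_filter_lt_sdiff hA hAK hJL hcard hjA]
    · have hgaps : {m ∈ L \ (J \ A) | j < m} = {m ∈ L \ J | j < m} := by
        ext m
        have := fun hm ↦ hA.2 m hm j (mem_sdiff.2 ⟨hjJ, hjA⟩)
        grind
      simp [hjJ, hjA, hgaps]
  · have hjA : j ∉ A := fun h ↦ hjJ (hA.1 h)
    simp [hjJ, hjA]

lemma dicksonExponent_add_sdiff (hK : IsInitialSegment K L) (hAK : A ⊆ K) :
    dicksonExponent p K A + dicksonExponent p L (L \ K) = dicksonExponent p L (A ∪ L \ K) := by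
  have hsdiff : (A ∪ L \ K) \ A = L \ K :=
    union_sdiff_cancel_left (disjoint_of_subset_left hAK disjoint_sdiff)
  have hA : IsInitialSegment A (A ∪ L \ K) :=
    ⟨subset_union_left, fun x hx y hy ↦ hK.2 x (hAK hx) y (hsdiff ▸ hy)⟩
  rw [← dicksonExponent_add hK hA hAK (union_subset (hAK.trans hK.1) sdiff_subset)
    (by rw [hsdiff]), hsdiff]

lemma eq_sdiff_of_dicksonExponent_add_eq (hp : 1 < p) (hAL : A ⊆ L)
    (hcard : #A + #B = #J) (h : dicksonExponent p K A + dicksonExponent p L B =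
      dicksonExponent p L J) : IsInitialSegment A J ∧ B = J \ A := by
  have hunion : A ∪ B = J := by
    simpa only [Finsupp.support_add_eq_union, support_dicksonExponent (by omega : p ≠ 0)]
      using congrArg Finsupp.support h
  have hdisj : Disjoint A B := by
    rw [← card_union_eq_card_add_card, hunion, hcard]
  have hB : B = J \ A := by rw [← hunion, union_sdiff_cancel_left hdisj]
  refine ⟨⟨hunion ▸ subset_union_left, fun x hxA y hy ↦ ?_⟩, hB⟩
  rw [← hB] at hy
  have hyA : y ∉ A := disjoint_right.1 hdisj hy
  have hgaps : #{m ∈ L \ B | y < m} = #{m ∈ L \ J | y < m} := by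
    have hexp := DFunLike.congr_fun h y
    simp only [Finsupp.add_apply, dicksonExponent_apply, hyA, hy, ← hunion, mem_union, or_true,
      if_true, if_false, zero_add] at hexp
    rw [← hunion]
    exact Nat.pow_right_injective hp hexp
  have hsub : {m ∈ L \ J | y < m} ⊆ {m ∈ L \ B | y < m} := by grind
  by_contra hxy
  have hyx : y < x := lt_of_le_of_ne (not_lt.1 hxy) (by grind)
  have hx : x ∈ ({m ∈ L \ J | y < m} : Finset ι) := by
    rw [eq_of_subset_of_card_le hsub hgaps.le]
    have := hAL hxA
    have := disjoint_left.1 hdisj hxA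
    grind
  grind

lemma eq_sdiff_of_dicksonExponent_add_ne_zero (hAK : A ⊆ K) (hcard : #B = #(L \ K))
    (h : ∀ j ∈ L \ K, (dicksonExponent p K A + dicksonExponent p L B) j ≠ 0) : B = L \ K := by
  refine (eq_of_subset_of_card_le (fun j hj ↦ ?_) hcard.le).symm
  have hjA : j ∉ A := fun hA ↦ (mem_sdiff.1 hj).2 (hAK hA)
  by_contra hjB
  exact h j hj (by simp [dicksonExponent_apply, hjA, hjB])

end Exponents

section FormalDickson

open Finset

variable {ι : Type*} [LinearOrder ι] {p : ℕ} {I J K L : Finset ι}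
  {R : Type*} [CommSemiring R]

/-- The Dickson invariant of degree `r` in the Borel generators indexed by `I`, written as a
polynomial in formal variables standing for these generators. For `I = {1, …, k}` it represents
`d_{k, k - r}`, so `r` is the number of generators in each monomial. -/
noncomputable def dicksonPoly (R : Type*) [CommSemiring R] (p : ℕ) (I : Finset ι) (r : ℕ) :
    MvPolynomial ι R :=
  ∑ J ∈ I.powersetCard r, monomial (dicksonExponent p I J) 1

lemma exists_dicksonExponent_eq_of_mem_support {r : ℕ} {e : ι →₀ ℕ}
    (he : e ∈ (dicksonPoly R p I r).support) :
    ∃ J ∈ I.powersetCard r, dicksonExponent p I J = e := by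
  obtain ⟨J, hJ, heJ⟩ := mem_biUnion.1 (support_sum he)
  exact ⟨J, hJ, (mem_singleton.1 (support_monomial_subset heJ)).symm⟩

lemma coeff_dicksonExponent_dicksonPoly (hp : p ≠ 0) {r : ℕ} (hJ : J ∈ I.powersetCard r) :
    coeff (dicksonExponent p I J) (dicksonPoly R p I r) = 1 := by
  have hinj : Function.Injective (dicksonExponent p I) :=
    Function.LeftInverse.injective (support_dicksonExponent hp I)
  simp [dicksonPoly, coeff_sum, coeff_monomial, hinj.eq_iff, hJ]

lemma dicksonPoly_mul_dicksonPoly (a b : ℕ) :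
    dicksonPoly R p K a * dicksonPoly R p L b =
      ∑ AB ∈ K.powersetCard a ×ˢ L.powersetCard b,
        monomial (dicksonExponent p K AB.1 + dicksonExponent p L AB.2) 1 := by
  simp [dicksonPoly, sum_mul_sum, sum_product, monomial_mul]

lemma exists_dicksonExponent_add_eq_of_mem_support_mul {a b : ℕ} {e : ι →₀ ℕ}
    (he : e ∈ (dicksonPoly R p K a * dicksonPoly R p L b).support) :
    ∃ A ∈ K.powersetCard a, ∃ B ∈ L.powersetCard b,
      dicksonExponent p K A + dicksonExponent p L B = e := by
  rw [dicksonPoly_mul_dicksonPoly] at he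
  obtain ⟨⟨A, B⟩, hAB, heAB⟩ := mem_biUnion.1 (support_sum he)
  obtain ⟨hA, hB⟩ := mem_product.1 hAB
  exact ⟨A, hA, B, hB, (mem_singleton.1 (support_monomial_subset heAB)).symm⟩

lemma coeff_dicksonExponent_dicksonPoly_mul (hp : 1 < p) (hK : IsInitialSegment K L) {a : ℕ}
    (hJ : J ∈ L.powersetCard (a + #(L \ K))) :
    coeff (dicksonExponent p L J) (dicksonPoly R p K a * dicksonPoly R p L #(L \ K)) = 1 := by
  obtain ⟨hJL, hJcard⟩ := mem_powersetCard.1 hJ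
  obtain ⟨A, hA, rfl⟩ := exists_isInitialSegment_card_eq J (a := a) (by omega)
  have hcard : #(J \ A) = #(L \ K) := by rw [card_sdiff_of_subset hA.1]; omega
  have hAK : A ⊆ K := hK.subset_of_card_sdiff_le hA hJL hcard.ge
  rw [dicksonPoly_mul_dicksonPoly, coeff_sum, sum_eq_single (A, J \ A)]
  · rw [dicksonExponent_add hK hA hAK hJL hcard, coeff_monomial, if_pos rfl]
  · rintro ⟨A', B'⟩ hmem hne
    simp only [mem_product, mem_powersetCard] at hmem
    obtain ⟨⟨hA'K, hA'card⟩, -, hB'card⟩ := hmem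
    rw [coeff_monomial, if_neg]
    intro heq
    obtain ⟨hA', rfl⟩ := eq_sdiff_of_dicksonExponent_add_eq (B := B') hp
      (hA'K.trans hK.1) (by omega) heq
    exact hne (by rw [hA'.eq_of_card_eq hA hA'card])
  · simp [hAK, hJL, hcard, sdiff_subset.trans]

theorem support_dicksonPoly_subset_support_mul [Nontrivial R] (hp : 1 < p)
    (hK : IsInitialSegment K L) (a : ℕ) :
    (dicksonPoly R p L (a + #(L \ K))).support ⊆
      (dicksonPoly R p K a * dicksonPoly R p L #(L \ K)).support := by
  intro e he
  obtain ⟨J, hJ, rfl⟩ := exists_dicksonExponent_eq_of_mem_support he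
  rw [mem_support_iff, coeff_dicksonExponent_dicksonPoly_mul hp hK hJ]
  exact one_ne_zero

theorem exists_eq_zero_of_mem_support_dicksonPoly_mul_sub {R : Type*} [CommRing R] (hp : 1 < p)
    (hK : IsInitialSegment K L) {a : ℕ} {e : ι →₀ ℕ}
    (he : e ∈ (dicksonPoly R p K a * dicksonPoly R p L #(L \ K) -
      dicksonPoly R p L (a + #(L \ K))).support) :
    ∃ j ∈ L \ K, e j = 0 := by
  by_contra! hne
  have hnot : ∀ J ∈ L.powersetCard (a + #(L \ K)), dicksonExponent p L J ≠ e := by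
    rintro J hJ rfl
    apply mem_support_iff.1 he
    rw [coeff_sub, coeff_dicksonExponent_dicksonPoly_mul hp hK hJ,
      coeff_dicksonExponent_dicksonPoly (by omega) hJ, sub_self]
  rcases mem_union.1 (support_sub _ _ _ he) with hmul | hL
  · obtain ⟨A, hA, B, hB, rfl⟩ := exists_dicksonExponent_add_eq_of_mem_support_mul hmul
    obtain ⟨hAK, hAcard⟩ := mem_powersetCard.1 hA
    have hBcard := (mem_powersetCard.1 hB).2
    obtain rfl := eq_sdiff_of_dicksonExponent_add_ne_zero hAK hBcard hne
    refine hnot (A ∪ L \ K) (mem_powersetCard.2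
      ⟨union_subset (hAK.trans hK.1) sdiff_subset, ?_⟩) ?_
    · rw [card_union_of_disjoint (disjoint_of_subset_left hAK disjoint_sdiff), hAcard]
    · rw [dicksonExponent_add_sdiff hK hAK]
  · obtain ⟨J, hJ, hJe⟩ := exists_dicksonExponent_eq_of_mem_support hL
    exact hnot J hJ hJe

end FormalDickson

section GeneratingPolynomial

open Finset

variable {ι : Type*} [LinearOrder ι] {p : ℕ} {I : Finset ι} {m : ι}

lemma dicksonExponent_insert (hm : ∀ x ∈ I, x < m) {J : Finset ι} (hJ : J ⊆ I) :
    dicksonExponent p (insert m I) J = p • dicksonExponent p I J := by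
  have hmI : m ∉ I := fun h ↦ (hm m h).false
  ext j
  simp only [Finsupp.smul_apply, dicksonExponent_apply, smul_eq_mul, mul_ite, mul_zero]
  split_ifs with hj
  · have hgaps : {x ∈ insert m I \ J | j < x} = insert m {x ∈ I \ J | j < x} := by
      have := hm j (hJ hj)
      grind
    rw [hgaps, card_insert_of_notMem (by grind), pow_succ']
  · rfl

lemma dicksonExponent_insert_insert (hm : ∀ x ∈ I, x < m) {J : Finset ι} (hJ : J ⊆ I) :
    dicksonExponent p (insert m I) (insert m J) =
      Finsupp.single m 1 + dicksonExponent p I J := by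
  have hmI : m ∉ I := fun h ↦ (hm m h).false
  ext j
  simp only [Finsupp.add_apply, dicksonExponent_apply, insert_sdiff_insert,
    sdiff_insert_of_notMem hmI, mem_insert]
  rcases eq_or_ne j m with rfl | hjm
  · have hgaps : {x ∈ I \ J | j < x} = ∅ :=
      filter_eq_empty_iff.2 fun x hx ↦ (hm x (mem_sdiff.1 hx).1).not_gt
    have hjJ : j ∉ J := fun h ↦ hmI (hJ h)
    simp [hgaps, hjJ]
  · simp [hjm]

/-- The formal counterpart of `f_k`: its coefficients are, up to sign, the Dickson polynomials
`dicksonPoly R p I r`, and substituting the Borel generators for the variables when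
`I = {1, …, k}` recovers `f_k`. -/
noncomputable def dicksonGenPoly (R : Type*) [CommRing R] (p : ℕ) (I : Finset ι) :
    Polynomial (MvPolynomial ι R) :=
  ∑ J ∈ I.powerset,
    Polynomial.monomial (p ^ #(I \ J)) (monomial (dicksonExponent p I J) ((-1) ^ #J))

variable {R : Type*} [CommRing R]

lemma dicksonGenPoly_empty : dicksonGenPoly R p (∅ : Finset ι) = Polynomial.X := by
  have he : dicksonExponent p (∅ : Finset ι) ∅ = 0 := by ext j; simp [dicksonExponent_apply]
  simp [dicksonGenPoly, he, Polynomial.X]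

lemma dicksonGenPoly_insert [Fact p.Prime] [CharP R p] (hm : ∀ x ∈ I, x < m) :
    dicksonGenPoly R p (insert m I) =
      dicksonGenPoly R p I ^ p - Polynomial.C (X m) * dicksonGenPoly R p I := by
  have hmI : m ∉ I := fun h ↦ (hm m h).false
  rw [dicksonGenPoly, sum_powerset_insert hmI, sub_eq_add_neg]
  congr 1
  · rw [dicksonGenPoly, sum_pow_char]
    refine sum_congr rfl fun J hJ ↦ ?_
    have hJI := mem_powerset.1 hJ
    rw [dicksonExponent_insert hm hJI, insert_sdiff_of_notMem _ (fun h ↦ hmI (hJI h)),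
      card_insert_of_notMem (by grind), Polynomial.monomial_pow, monomial_pow, ← pow_mul,
      mul_comm (#J) p, pow_mul (-1 : R), neg_one_pow_expChar R p, pow_succ]
  · rw [dicksonGenPoly, mul_sum, ← sum_neg_distrib]
    refine sum_congr rfl fun J hJ ↦ ?_
    have hJI := mem_powerset.1 hJ
    rw [dicksonExponent_insert_insert hm hJI, insert_sdiff_insert, sdiff_insert_of_notMem hmI,
      card_insert_of_notMem (fun h ↦ hmI (hJI h)), Polynomial.C_mul_monomial, X, monomial_mul,
      one_mul, ← map_neg, ← map_neg, pow_succ, mul_neg_one]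

lemma coeff_dicksonGenPoly (hp : 1 < p) {r i : ℕ} (hri : r + i = #I) :
    (dicksonGenPoly R p I).coeff (p ^ i) = (-1) ^ r * dicksonPoly R p I r := by
  have hiff : ∀ J ∈ I.powerset, p ^ #(I \ J) = p ^ i ↔ #J = r := fun J hJ ↦ by
    rw [(Nat.pow_right_injective hp).eq_iff, card_sdiff_of_subset (mem_powerset.1 hJ)]
    have := card_le_card (mem_powerset.1 hJ)
    omega
  simp only [dicksonGenPoly, Polynomial.finsetSum_coeff, Polynomial.coeff_monomial]
  rw [sum_congr rfl fun J hJ ↦ if_congr (hiff J hJ) rfl rfl, ← sum_filter,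
    ← powersetCard_eq_filter, dicksonPoly, mul_sum]
  refine sum_congr rfl fun J hJ ↦ ?_
  rw [(mem_powersetCard.1 hJ).2, ← map_one C, ← map_neg, ← map_pow, C_mul_monomial, mul_one]

end GeneratingPolynomial

section AdditivePolynomials

variable {p : ℕ} [Fact p.Prime] {R : Type*} [CommRing R]

lemma prod_X_sub_C_eq_X_pow_card_sub_X (K : Type*) [Field K] [Fintype K] :
    ∏ c : K, (Polynomial.X - Polynomial.C c) =
      (Polynomial.X ^ Fintype.card K - Polynomial.X : Polynomial K) := by
  have hroots := FiniteField.roots_X_pow_card_sub_X K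
  have hdeg := FiniteField.X_pow_card_sub_X_natDegree_eq K (Fintype.one_lt_card (α := K))
  have hmonic : (Polynomial.X ^ Fintype.card K - Polynomial.X : Polynomial K).Monic :=
    Polynomial.monic_X_pow_sub (by simpa using Fintype.one_lt_card (α := K))
  have hprod := Polynomial.prod_multiset_X_sub_C_of_monic_of_roots_card_eq hmonic (by
    rw [hroots, hdeg, Finset.card_val, Finset.card_univ])
  rwa [hroots] at hprod

lemma prod_sub_smul (K : Type*) [Field K] [Fintype K] [Algebra K R] (x y : R) :
    ∏ c : K, (x - c • y) = x ^ Fintype.card K - y ^ (Fintype.card K - 1) * x := by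
  have h := congrArg (fun q ↦ aeval ![x, y] (q.homogenize (Fintype.card K)))
    (prod_X_sub_C_eq_X_pow_card_sub_X K)
  have hprod := Polynomial.homogenize_finsetProd (s := Finset.univ)
    (p := fun c : K ↦ Polynomial.X - Polynomial.C c) (n := fun _ ↦ 1)
    fun c _ ↦ (Polynomial.natDegree_X_sub_C c).le
  simp only [Finset.sum_const, Finset.card_univ, smul_eq_mul, mul_one] at hprod
  simpa [hprod, Polynomial.homogenize_X, Algebra.smul_def, mul_comm] using h

/-- `F` is an additive polynomial: `F(X + a) = F(X) + F(a)`. The second argument ranges over the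
elements of `R` rather than being a second indeterminate. -/
def IsAdditivePolynomial (F : Polynomial R) : Prop :=
  ∀ a, F.comp (Polynomial.X + Polynomial.C a) = F + Polynomial.C (F.eval a)

namespace IsAdditivePolynomial

variable {F : Polynomial R}

lemma eval_smul {m : ℕ} [Algebra (ZMod m) R] (hF : IsAdditivePolynomial F) (c : ZMod m)
    (a : R) : F.eval (c • a) = c • F.eval a := by
  have hadd : ∀ x y, F.eval (x + y) = F.eval x + F.eval y := fun x y ↦ by
    simpa using congrArg (Polynomial.eval x) (hF y)
  exact ZMod.map_smul (AddMonoidHom.mk' (F.eval ·) hadd) c a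

lemma prod_comp_X_sub_C_smul [Algebra (ZMod p) R] (hF : IsAdditivePolynomial F) (y : R) :
    ∏ c : ZMod p, F.comp (Polynomial.X - Polynomial.C (c • y)) =
      F ^ p - Polynomial.C (F.eval y ^ (p - 1)) * F := by
  have hcomp : ∀ c : ZMod p, F.comp (Polynomial.X - Polynomial.C (c • y)) =
      F - c • Polynomial.C (F.eval y) := fun c ↦ by
    rw [sub_eq_add_neg, ← Polynomial.C_neg, ← neg_smul, hF, hF.eval_smul, neg_smul,
      Polynomial.C_neg, ← sub_eq_add_neg, Polynomial.smul_C]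
  simp only [hcomp, prod_sub_smul, ZMod.card, Polynomial.C_pow]

lemma pow_char_sub_C_mul [CharP R p] (hF : IsAdditivePolynomial F) (a : R) :
    IsAdditivePolynomial (F ^ p - Polynomial.C a * F) := fun b ↦ by
  simp only [Polynomial.sub_comp, Polynomial.pow_comp, Polynomial.mul_comp, Polynomial.C_comp,
    hF b, add_pow_char, Polynomial.eval_sub, Polynomial.eval_pow, Polynomial.eval_mul,
    Polynomial.eval_C, Polynomial.C_sub, Polynomial.C_pow, Polynomial.C_mul]
  ring

end IsAdditivePolynomial

end AdditivePolynomials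

section DicksonInvariants

variable {p n k : ℕ} [Fact p.Prime]

/-- The indices of the first `k` variables, or of `h_1, …, h_k`; as in `V` and `hGen`, the paper's
index `j` is the element `j - 1` of `Fin n`. -/
def firstIndices (n k : ℕ) : Finset (Fin n) :=
  {j | j.val < k}

lemma mem_firstIndices {j : Fin n} : j ∈ firstIndices n k ↔ j.val < k := by
  simp [firstIndices]

lemma card_firstIndices (hk : k ≤ n) : (firstIndices n k).card = k := by
  simp [firstIndices, Fin.card_filter_val_lt, hk]

lemma isInitialSegment_firstIndices {l : ℕ} (hkl : k ≤ l) :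
    IsInitialSegment (firstIndices n k) (firstIndices n l) := by
  simp only [IsInitialSegment, Finset.subset_iff, Finset.mem_sdiff, mem_firstIndices, Fin.lt_def]
  exact ⟨fun j hj ↦ by omega, fun x hx y hy ↦ by omega⟩

lemma card_firstIndices_sdiff {t : ℕ} (hkt : k + t ≤ n) :
    (firstIndices n (k + t) \ firstIndices n k).card = t := by
  rw [Finset.card_sdiff_of_subset (isInitialSegment_firstIndices (by omega)).1,
    card_firstIndices hkt, card_firstIndices (by omega), Nat.add_sub_cancel_left]

lemma firstIndices_succ (hk : k < n) :
    firstIndices n (k + 1) = insert ⟨k, hk⟩ (firstIndices n k) := by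
  ext j
  simp only [mem_firstIndices, Finset.mem_insert, Fin.ext_iff]
  omega

lemma mem_V {u : MvPolynomial (Fin n) (ZMod p)} :
    u ∈ V p n k ↔ ∃ c : Fin n → ZMod p, ∑ j ∈ firstIndices n k, c j • X j = u := by
  simp [V, firstIndices, smul_eq_C_mul]

lemma coeff_single_eq_zero_of_mem_V {u : MvPolynomial (Fin n) (ZMod p)} (hu : u ∈ V p n k)
    {i : Fin n} (hi : k ≤ i.val) : coeff (Finsupp.single i 1) u = 0 := by
  obtain ⟨c, rfl⟩ := mem_V.1 hu
  rw [coeff_sum]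
  refine Finset.sum_eq_zero fun j hj ↦ ?_
  have hji : j ≠ i := fun h ↦ by
    have := mem_firstIndices.1 hj
    omega
  simp [coeff_X, Finsupp.single_left_inj, hji]

lemma V_succ (hk : k < n) :
    V p n (k + 1) = (V p n k ×ˢ (Finset.univ : Finset (ZMod p))).image
      fun uc ↦ uc.1 + uc.2 • X ⟨k, hk⟩ := by
  have hnot : (⟨k, hk⟩ : Fin n) ∉ firstIndices n k := by simp [mem_firstIndices]
  ext u
  simp only [Finset.mem_image, Finset.mem_product, Finset.mem_univ, and_true, Prod.exists, mem_V,
    firstIndices_succ hk, Finset.sum_insert hnot]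
  constructor
  · rintro ⟨c, rfl⟩
    exact ⟨_, c ⟨k, hk⟩, ⟨c, rfl⟩, add_comm _ _⟩
  · rintro ⟨_, b, ⟨c, rfl⟩, rfl⟩
    refine ⟨Function.update c ⟨k, hk⟩ b, ?_⟩
    rw [Function.update_self, add_comm]
    congr 1
    refine Finset.sum_congr rfl fun j hj ↦ ?_
    rw [Function.update_of_ne (ne_of_mem_of_not_mem hj hnot)]

lemma injOn_V_add_smul_X (hk : k < n) :
    Set.InjOn (fun uc : MvPolynomial (Fin n) (ZMod p) × ZMod p ↦ uc.1 + uc.2 • X ⟨k, hk⟩)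
      (V p n k ×ˢ (Finset.univ : Finset (ZMod p)) : Finset _) := by
  rintro ⟨u, c⟩ hu ⟨u', c'⟩ hu' heq
  simp only [Finset.coe_product, Set.mem_prod, Finset.mem_coe] at hu hu'
  have hcoeff := congrArg (coeff (Finsupp.single ⟨k, hk⟩ 1)) heq
  obtain rfl : c = c' := by
    simpa [coeff_single_eq_zero_of_mem_V hu.1, coeff_single_eq_zero_of_mem_V hu'.1, coeff_X]
      using hcoeff
  simpa using heq

lemma f_zero : f p n 0 = Polynomial.X := by
  have hV : V p n 0 = {0} := by
    ext u
    simp [V, eq_comm]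
  simp [f, hV]

lemma f_succ_eq_prod_comp (hk : k < n) :
    f p n (k + 1) =
      ∏ c : ZMod p, (f p n k).comp (Polynomial.X - Polynomial.C (c • X ⟨k, hk⟩)) := by
  rw [f, V_succ hk, Finset.prod_image (injOn_V_add_smul_X hk), Finset.prod_product_right]
  refine Finset.prod_congr rfl fun c _ ↦ ?_
  rw [f, Polynomial.prod_comp]
  refine Finset.prod_congr rfl fun u _ ↦ ?_
  simp only [Polynomial.sub_comp, Polynomial.X_comp, Polynomial.C_comp, map_add]
  ring

lemma isAdditivePolynomial_f (hk : k ≤ n) : IsAdditivePolynomial (f p n k) := by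
  induction k with
  | zero => simp [IsAdditivePolynomial, f_zero]
  | succ k ih =>
    have hadd := ih (by omega)
    rw [f_succ_eq_prod_comp hk, hadd.prod_comp_X_sub_C_smul]
    exact hadd.pow_char_sub_C_mul _

lemma f_succ (hk : k < n) :
    f p n (k + 1) = f p n k ^ p - Polynomial.C (hGen p n ⟨k, hk⟩) * f p n k := by
  rw [f_succ_eq_prod_comp hk, (isAdditivePolynomial_f hk.le).prod_comp_X_sub_C_smul, hGen]

lemma f_eq_map_dicksonGenPoly (hk : k ≤ n) :
    f p n k = (dicksonGenPoly (ZMod p) p (firstIndices n k)).map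
      (aeval (hGen p n) : MvPolynomial (Fin n) (ZMod p) →ₐ[ZMod p] _).toRingHom := by
  induction k with
  | zero =>
    have hempty : firstIndices n 0 = ∅ := by simp [firstIndices]
    rw [f_zero, hempty, dicksonGenPoly_empty, Polynomial.map_X]
  | succ k ih =>
    have hlt : ∀ j ∈ firstIndices n k, j < ⟨k, hk⟩ := fun j hj ↦ mem_firstIndices.1 hj
    rw [f_succ hk, firstIndices_succ hk, dicksonGenPoly_insert hlt, ih (by omega)]
    simp

lemma d_eq_aeval_dicksonPoly {i : ℕ} (hk : k ≤ n) (hi : i ≤ k) :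
    d p n k i = aeval (hGen p n) (dicksonPoly (ZMod p) p (firstIndices n k) (k - i)) := by
  have hcard : k - i + i = (firstIndices n k).card := by
    rw [card_firstIndices hk, Nat.sub_add_cancel hi]
  rw [d, f_eq_map_dicksonGenPoly hk, Polynomial.coeff_map,
    coeff_dicksonGenPoly (Fact.out : p.Prime).one_lt hcard]
  simp [← mul_assoc, ← mul_pow]

lemma f_mem_liftsRing_adjoin (hk : k ≤ n) :
    f p n k ∈ Polynomial.liftsRing (algebraMap
      (Algebra.adjoin (ZMod p) (Set.range (hGen p n))) (MvPolynomial (Fin n) (ZMod p))) := by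
  induction k with
  | zero =>
    rw [f_zero, ← Polynomial.lifts_iff_liftsRing]
    exact Polynomial.X_mem_lifts _
  | succ k ih =>
    have hmem := ih (by omega)
    rw [f_succ hk]
    refine sub_mem (pow_mem hmem p) (mul_mem ?_ hmem)
    rw [← Polynomial.lifts_iff_liftsRing]
    exact Polynomial.C'_mem_lifts
      ⟨⟨_, Algebra.subset_adjoin (Set.mem_range_self _)⟩, rfl⟩

lemma eval_X_f (j : Fin n) : (f p n n).eval (X j) = 0 := by
  rw [f, Polynomial.eval_prod]
  refine Finset.prod_eq_zero (i := X j) (mem_V.2 ⟨Pi.single j 1, ?_⟩) (by simp)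
  simp [Pi.single_apply, ite_smul, mem_firstIndices]

lemma isIntegral_adjoin_hGen_X (j : Fin n) :
    IsIntegral (Algebra.adjoin (ZMod p) (Set.range (hGen p n)))
      (X j : MvPolynomial (Fin n) (ZMod p)) := by
  have hmonic : (f p n n).Monic := Polynomial.monic_prod_X_sub_C _ _
  obtain ⟨q, hq, -, hqmonic⟩ := Polynomial.lifts_and_natDegree_eq_and_monic
    ((Polynomial.lifts_iff_liftsRing _ _).2 (f_mem_liftsRing_adjoin le_rfl)) hmonic
  exact ⟨q, hqmonic, by rw [← Polynomial.eval_map, hq, eval_X_f]⟩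

theorem algebraicIndependent_hGen : AlgebraicIndependent (ZMod p) (hGen p n) := by
  let A := Algebra.adjoin (ZMod p) (Set.range (hGen p n))
  have hintegral : Algebra.IsIntegral A (MvPolynomial (Fin n) (ZMod p)) := by
    refine ⟨fun q ↦ ?_⟩
    induction q using MvPolynomial.induction_on with
    | C a => exact isIntegral_algebraMap (R := A) (x := algebraMap (ZMod p) A a)
    | add q r hq hr => exact hq.add hr
    | mul_X q j hq => exact hq.mul (isIntegral_adjoin_hGen_X j)
  have halg : Algebra.IsAlgebraic A (MvPolynomial (Fin n) (ZMod p)) := inferInstance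
  exact (Algebra.IsAlgebraic.isTranscendenceBasis_of_le_trdeg_of_finite (ZMod p) (hGen p n)
    (by simp [MvPolynomial.trdeg_of_isDomain])).1

end DicksonInvariants

/-- every monomial (in the `h`'s) of `d_{k+t,s}` is a monomial of
`d_{k,s} d_{k+t,k}`, and no monomial of the difference is divisible by `h_{k+1} ⋯ h_{k+t}`. -/
theorem stmt11 (p n : ℕ) [Fact p.Prime] (s k t : ℕ) (hs : s < k) (ht : 1 ≤ t)
    (hkt : k + t ≤ n) (P Q : MvPolynomial (Fin n) (ZMod p))
    (hP : aeval (hGen p n) P = d p n (k + t) s)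
    (hQ : aeval (hGen p n) Q = d p n k s * d p n (k + t) k) :
    P.support ⊆ Q.support ∧
    ∀ e ∈ (Q - P).support, ∃ j : Fin n, k ≤ j.val ∧ j.val < k + t ∧ e j = 0 := by
  let K := firstIndices n k
  let L := firstIndices n (k + t)
  have hp : 1 < p := (Fact.out : p.Prime).one_lt
  have hK : IsInitialSegment K L := isInitialSegment_firstIndices (by omega)
  have hcard : (L \ K).card = t := card_firstIndices_sdiff hkt
  obtain rfl : P = dicksonPoly (ZMod p) p L (k - s + (L \ K).card) := by
    apply algebraicIndependent_hGen
    rw [hP, d_eq_aeval_dicksonPoly hkt (by omega), hcard, ← Nat.sub_add_comm hs.le]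
  obtain rfl : Q = dicksonPoly (ZMod p) p K (k - s) * dicksonPoly (ZMod p) p L (L \ K).card := by
    apply algebraicIndependent_hGen
    rw [hQ, d_eq_aeval_dicksonPoly (by omega) hs.le, d_eq_aeval_dicksonPoly hkt (by omega),
      ← map_mul, hcard, Nat.add_sub_cancel_left]
  refine ⟨support_dicksonPoly_subset_support_mul hp hK _, fun e he ↦ ?_⟩
  obtain ⟨j, hj, hej⟩ := exists_eq_zero_of_mem_support_dicksonPoly_mul_sub hp hK he
  rw [Finset.mem_sdiff, mem_firstIndices, mem_firstIndices, not_lt] at hj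
  exact ⟨j, hj.2, hj.1, hej⟩
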